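/- arXiv:1407.3951 — 2 statements merged into one kernel-verified Lean document; each statement's English description precedes it below -/
import Mathlib

section
/- The family 𝒮ℱ of space-filling curves is maximal lineable in C(I,ℝ²): there exists a linear subspace M of C(I,ℝ²) whose dimension equals 𝔠, the cardinality of the continuum (which equals the dimension of C(I,ℝ²)), such that every nonzero element of M is a space-filling curve. -/
/-- A continuous map `φ : I → ℝ²` is a space-filling curve if its image is Jordan
measurable with positive Jordan content; equivalently, the Lebesgue measure of the
topological boundary of its image is zero and the interior of its image is nonempty. -/
def SpaceFilling : Set C(unitInterval, ℝ × ℝ) :=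
  {φ | MeasureTheory.volume (frontier (Set.range ⇑φ)) = 0 ∧
       (interior (Set.range ⇑φ)).Nonempty}

/-!
Let `γ : [0, 1] → [0, 1] × [0, 1]` be a Peano curve. For continuous `f : [0, 1] → ℝ` the curve
`(f × f) ∘ γ` depends linearly on `f`, and its image is the square `f([0, 1]) × f([0, 1])`, which
is space filling as soon as `f` is not constant. A nonzero `f` with `f 0 = 0` is not constant, and
these `f` form a space of dimension `𝔠`, because the powers `t ↦ t ^ r` with `r > 0` are distinct
characters of the monoid `[0, 1]` and hence linearly independent. No larger dimension is possible,
since there are only `𝔠` continuous curves.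
-/

open Cardinal Function Set MeasureTheory
open scoped unitInterval

universe u v

/-- A continuous surjection from the Cantor set onto `X` extends to `[0, 1]` by Tietze. -/
theorem exists_continuousMap_unitInterval_surjective (X : Type u) [TopologicalSpace X]
    [TopologicalSpace.MetrizableSpace X] [CompactSpace X] [Nonempty X]
    [TietzeExtension.{0} X] : ∃ γ : C(I, X), Surjective γ := by
  let := TopologicalSpace.metrizableSpaceMetric X
  obtain ⟨f, f_cont, f_surj⟩ := exists_nat_bool_continuous_surjective_of_compact X
  have incl_closed : Topology.IsClosedEmbedding (inclusion cantorSet_subset_unitInterval) :=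
    .inclusion _ (isClosed_cantorSet.preimage continuous_subtype_val)
  obtain ⟨γ, hγ⟩ := ContinuousMap.exists_extension' incl_closed
    ⟨f ∘ cantorSetHomeomorphNatToBool, f_cont.comp cantorSetHomeomorphNatToBool.continuous⟩
  have comp_surj : Surjective (γ ∘ inclusion cantorSet_subset_unitInterval) :=
    hγ ▸ f_surj.comp cantorSetHomeomorphNatToBool.surjective
  exact ⟨γ, comp_surj.of_comp⟩

theorem mk_continuousMap_le (X : Type u) (Y : Type v) [TopologicalSpace X]
    [TopologicalSpace.SeparableSpace X] [Nonempty X] [TopologicalSpace Y] [T2Space Y] :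
    #C(X, Y) ≤ lift.{u} #Y ^ ℵ₀ := by
  have restrict_injective :
      Injective fun (f : C(X, Y)) (n : ℕ) ↦ f (TopologicalSpace.denseSeq X n) := fun f g h ↦
    DFunLike.coe_injective <| (TopologicalSpace.denseRange_denseSeq X).equalizer
      f.continuous g.continuous h
  simpa using mk_le_of_injective (ULift.up_injective.{v, u}.comp restrict_injective)

/-- The character `t ↦ t ^ r` of the multiplicative monoid `[0, 1]`; the powers are realised as
characters so that Dedekind's independence theorem applies to them. -/
noncomputable def rpowCharacter (r : ℝ) : I →* ℝ where
  toFun t := (t : ℝ) ^ r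
  map_one' := by simp
  map_mul' s t := Real.mul_rpow s.2.1 t.2.1

theorem rpowCharacter_injective : Injective rpowCharacter := by
  intro r s h
  have half_rpow_eq : (1 / 2 : ℝ) ^ r = (1 / 2 : ℝ) ^ s :=
    DFunLike.congr_fun h (⟨1 / 2, by norm_num, by norm_num⟩ : I)
  exact (Real.rpow_right_inj (by norm_num) (by norm_num)).1 half_rpow_eq

theorem linearIndependent_rpow : LinearIndependent ℝ fun (r : ℝ) (t : I) ↦ (t : ℝ) ^ r :=
  (linearIndependent_monoidHom I ℝ).comp rpowCharacter rpowCharacter_injective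

theorem continuum_le_rank_ker_eval_zero :
    𝔠 ≤ Module.rank ℝ (ContinuousMap.evalCLM ℝ 0 : C(I, ℝ) →L[ℝ] ℝ).ker := by
  let power (r : Ioi (0 : ℝ)) : (ContinuousMap.evalCLM ℝ 0 : C(I, ℝ) →L[ℝ] ℝ).ker :=
    ⟨⟨fun t ↦ (t : ℝ) ^ (r : ℝ),
      (Real.continuous_rpow_const r.2.le).comp continuous_subtype_val⟩,
      Real.zero_rpow r.2.ne'⟩
  have power_independent : LinearIndependent ℝ power :=
    .of_comp (ContinuousMap.coeFnLinearMap ℝ ∘ₗ Submodule.subtype _)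
      (linearIndependent_rpow.comp _ Subtype.val_injective)
  simpa only [mk_Ioi_real] using power_independent.cardinal_le_rank

section SquareCurve

variable {T X E : Type*} [TopologicalSpace T] [TopologicalSpace X] [TopologicalSpace E]

/-- The linear map sending `f` to `(f × f) ∘ γ`. For a curve `γ` onto `X × X` it produces curves
whose image is the square of the image of `f`. -/
def squareCurve (R : Type*) [Semiring R] [AddCommMonoid E] [Module R E] [ContinuousAdd E]
    [ContinuousConstSMul R E] (γ : C(T, X × X)) : C(X, E) →ₗ[R] C(T, E × E) where
  toFun f := (f.prodMap f).comp γ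
  map_add' _ _ := rfl
  map_smul' _ _ := rfl

variable {R : Type*} [Semiring R] [AddCommMonoid E] [Module R E] [ContinuousAdd E]
  [ContinuousConstSMul R E] {γ : C(T, X × X)}

theorem squareCurve_injective (hγ : Surjective γ) :
    Injective (squareCurve R γ : C(X, E) →ₗ[R] C(T, E × E)) := by
  intro f g h
  have prodMap_eq : f.prodMap f = g.prodMap g := (ContinuousMap.cancel_right hγ).1 h
  ext x
  exact congrArg Prod.fst (DFunLike.congr_fun prodMap_eq (x, x))

theorem range_squareCurve (hγ : Surjective γ) (f : C(X, E)) :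
    range (squareCurve R γ f) = range f ×ˢ range f :=
  (hγ.range_comp (Prod.map f f)).trans range_prodMap

end SquareCurve

theorem squareCurve_mem_spaceFilling {X : Type*} [TopologicalSpace X] [PreconnectedSpace X]
    {γ : C(I, X × X)} (hγ : Surjective γ) {f : C(X, ℝ)} (hf : (range f).Nontrivial) :
    squareCurve ℝ γ f ∈ SpaceFilling := by
  have range_convex : Convex ℝ (range f) :=
    (isPreconnected_range f.continuous).ordConnected.convex
  have interior_nonempty : (interior (range f)).Nonempty :=
    range_convex.nontrivial_iff_nonempty_interior.1 hf
  simp only [SpaceFilling, mem_ofPred_eq, range_squareCurve hγ, interior_prod_eq]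
  exact ⟨(range_convex.prod range_convex).addHaar_frontier volume,
    interior_nonempty.prod interior_nonempty⟩

theorem range_nontrivial_of_apply_eq_zero {X M : Type*} [TopologicalSpace X] [TopologicalSpace M]
    [Zero M] {f : C(X, M)} {x : X} (hx : f x = 0) (hf : f ≠ 0) : (range f).Nontrivial := by
  obtain ⟨y, hy⟩ := DFunLike.ne_iff.1 hf
  exact ⟨f x, mem_range_self x, f y, mem_range_self y, fun h ↦ hy (h.symm.trans hx)⟩

theorem spaceFilling_maximal_lineable :
    Module.rank ℝ C(unitInterval, ℝ × ℝ) = Cardinal.continuum ∧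
    ∃ M : Submodule ℝ C(unitInterval, ℝ × ℝ),
      Module.rank ℝ M = Cardinal.continuum ∧
      ∀ f ∈ M, f ≠ 0 → f ∈ SpaceFilling := by
  obtain ⟨γ, hγ⟩ := exists_continuousMap_unitInterval_surjective (I × I)
  let K := (ContinuousMap.evalCLM ℝ 0 : C(I, ℝ) →L[ℝ] ℝ).ker
  let M := K.map (squareCurve ℝ γ)
  have rank_curves_le : Module.rank ℝ C(I, ℝ × ℝ) ≤ 𝔠 :=
    calc Module.rank ℝ C(I, ℝ × ℝ) ≤ #C(I, ℝ × ℝ) := rank_le_card ℝ _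
      _ ≤ lift.{0} #(ℝ × ℝ) ^ ℵ₀ := mk_continuousMap_le I (ℝ × ℝ)
      _ = 𝔠 := by simp [mk_real]
  have rank_M_le : Module.rank ℝ M ≤ Module.rank ℝ C(I, ℝ × ℝ) := M.rank_le
  have le_rank_M : 𝔠 ≤ Module.rank ℝ M :=
    continuum_le_rank_ker_eval_zero.trans_eq
      (K.equivMapOfInjective _ (squareCurve_injective hγ)).rank_eq
  refine ⟨rank_curves_le.antisymm (le_rank_M.trans rank_M_le), M,
    (rank_M_le.trans rank_curves_le).antisymm le_rank_M, ?_⟩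
  rintro _ ⟨f, hfK, rfl⟩ hf
  have f_ne_zero : f ≠ 0 := ne_of_apply_ne (squareCurve ℝ γ) (by rwa [map_zero])
  exact squareCurve_mem_spaceFilling hγ (range_nontrivial_of_apply_eq_zero hfK f_ne_zero)
end

section
/- The family λ-𝒮ℱ of λ-space-filling curves is maximal dense-lineable in C(I,ℝ²): there exists a dense linear subspace M of the Banach space C(I,ℝ²) with dimension 𝔠, the cardinality of the continuum, such that every nonzero element of M belongs to λ-𝒮ℱ. -/
/-- A continuous map `φ : I → ℝ²` is a λ-space-filling curve if the two-dimensional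
Lebesgue measure of its image is strictly positive. -/
def LambdaSpaceFilling : Set C(unitInterval, ℝ × ℝ) :=
  {φ | 0 < MeasureTheory.volume (Set.range ⇑φ)}

/-!
Let `D` be the dense space of maps that are constant near a point `p`, and let `h` be a map to `ℝⁿ`
sending every neighbourhood of `p` to a set with nonempty interior; such an `h` exists because the
domain contains a Cantor set, which surjects onto a ball. A nonzero linear combination `f` of the
functions `s ↦ exp (r * s)`, `r > 0`, is analytic and not constant, so applying it to each
coordinate keeps interiors nonempty. Hence `(f, …, f) ∘ h`, perturbed by any element of `D`, still
has an image with nonempty interior. These maps `(f, …, f) ∘ h` form a space `G` of dimension `𝔠`,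
and adding suitable large elements of `D` to its basis vectors makes their span dense.
-/

open Set Filter Topology TopologicalSpace Cardinal

section FeeblyOpen

variable {X Y Z : Type*} [TopologicalSpace X] [TopologicalSpace Y] [TopologicalSpace Z]

/-- A map is feebly open at `x` if it sends every neighbourhood of `x` to a set with nonempty
interior. Unlike for open maps, the image of `x` need not lie in that interior. -/
def FeeblyOpenAt (f : X → Y) (x : X) : Prop :=
  ∀ U ∈ 𝓝 x, (interior (f '' U)).Nonempty

theorem FeeblyOpenAt.interior_range_nonempty {f : X → Y} {x : X} (hf : FeeblyOpenAt f x) :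
    (interior (range f)).Nonempty :=
  image_univ (f := f) ▸ hf univ univ_mem

theorem FeeblyOpenAt.congr {f g : X → Y} {x : X} (hf : FeeblyOpenAt f x) (h : f =ᶠ[𝓝 x] g) :
    FeeblyOpenAt g x := by
  intro U hU
  refine (hf _ (inter_mem hU h)).mono (interior_mono ?_)
  rintro _ ⟨t, ⟨htU, ht⟩, rfl⟩
  exact ⟨t, htU, ht.symm⟩

theorem FeeblyOpenAt.comp {g : Y → Z} {f : X → Y} {x : X} (hg : ∀ y, FeeblyOpenAt g y)
    (hf : FeeblyOpenAt f x) : FeeblyOpenAt (g ∘ f) x := by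
  intro U hU
  obtain ⟨y, hy⟩ := hf U hU
  exact image_comp g f U ▸ hg y _ (mem_interior_iff_mem_nhds.1 hy)

theorem feeblyOpenAt_of_isOpenMap {f : X → Y} (hf : IsOpenMap f) (x : X) : FeeblyOpenAt f x :=
  fun _ hU ↦ ⟨f x, mem_interior_iff_mem_nhds.2 (hf.image_mem_nhds hU)⟩

theorem feeblyOpenAt_piMap {ι : Type*} [Finite ι] {A B : ι → Type*}
    [∀ i, TopologicalSpace (A i)] [∀ i, TopologicalSpace (B i)] {f : ∀ i, A i → B i}
    {x : ∀ i, A i} (hf : ∀ i, FeeblyOpenAt (f i) (x i)) : FeeblyOpenAt (Pi.map f) x := by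
  intro U hU
  obtain ⟨I, -, V, hV, hVU⟩ := mem_pi.1 (nhds_pi (a := x) ▸ hU)
  have hbox : univ.pi V ⊆ U := (pi_mono' (fun _ _ ↦ Subset.rfl) (subset_univ I)).trans hVU
  refine Nonempty.mono (interior_mono (image_mono hbox)) ?_
  rw [piMap_image_univ_pi, interior_pi_set finite_univ, univ_pi_nonempty_iff]
  exact fun i ↦ hf i _ (hV i)

theorem isNowhereDense_union {s t : Set X} (hs : IsNowhereDense s) (ht : IsNowhereDense t) :
    IsNowhereDense (s ∪ t) := by
  rw [IsNowhereDense, closure_union, interior_union_isClosed_of_interior_empty isClosed_closure ht]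
  exact hs

theorem exists_feeblyOpenAt [CompactSpace X] [LocallyCompactSpace X] [T2Space Y] {h : X → Y}
    (hc : Continuous h) (hne : (interior (range h)).Nonempty) : ∃ p, FeeblyOpenAt h p := by
  by_contra! hnot
  have hlocal : ∀ x, ∃ K ∈ 𝓝 x, IsNowhereDense (h '' K) := by
    intro x
    obtain ⟨U, hU, hU_empty⟩ : ∃ U ∈ 𝓝 x, interior (h '' U) = ∅ := by
      simpa only [FeeblyOpenAt, not_forall, not_nonempty_iff_eq_empty, exists_prop] using hnot x
    obtain ⟨K, hK, hKU, hK_compact⟩ := local_compact_nhds hU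
    exact ⟨K, hK, (hK_compact.image hc).isClosed.isNowhereDense_iff.2
      (subset_empty_iff.1 (hU_empty ▸ interior_mono (image_mono hKU)))⟩
  have hrange : IsNowhereDense (h '' univ) := by
    refine isCompact_univ.induction_on (p := fun s ↦ IsNowhereDense (h '' s)) ?_ ?_ ?_ ?_
    · simp
    · exact fun s t hst ht ↦ ht.mono (image_mono hst)
    · exact fun s t hs ht ↦ image_union h s t ▸ isNowhereDense_union hs ht
    · intro x _
      obtain ⟨K, hK, hK_nowhere⟩ := hlocal x
      exact ⟨K, mem_nhdsWithin_of_mem_nhds hK, hK_nowhere⟩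
  rw [image_univ, (isCompact_range hc).isClosed.isNowhereDense_iff] at hrange
  exact hne.ne_empty hrange

end FeeblyOpen

section CompactMetrizable

universe u

variable (X : Type u) [TopologicalSpace X] [CompactSpace X] [MetrizableSpace X] [Uncountable X]

theorem exists_isClosedEmbedding_nat_bool : ∃ e : (ℕ → Bool) → X, IsClosedEmbedding e := by
  let _ := metrizableSpaceMetric X
  obtain ⟨e, -, he, he_inj⟩ := isClosed_univ.exists_nat_bool_injection_of_not_countable
    (not_countable_univ (α := X))
  exact ⟨e, he.isClosedEmbedding he_inj⟩

theorem exists_continuousMap_subset_range {Y : Type*} [MetricSpace Y] [TietzeExtension.{u} Y]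
    {K : Set Y} (hK : IsCompact K) (hne : K.Nonempty) : ∃ h : C(X, Y), K ⊆ range h := by
  have := hne.to_subtype
  have := isCompact_iff_compactSpace.1 hK
  obtain ⟨φ, hφ, hφ_surj⟩ := exists_nat_bool_continuous_surjective_of_compact K
  obtain ⟨e, he⟩ := exists_isClosedEmbedding_nat_bool X
  obtain ⟨h, hh⟩ := ContinuousMap.exists_extension' he
    ⟨fun w ↦ (φ w : Y), continuous_subtype_val.comp hφ⟩
  refine ⟨h, fun y hy ↦ ?_⟩
  obtain ⟨w, hw⟩ := hφ_surj ⟨y, hy⟩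
  exact ⟨e w, (congrFun hh w).trans (congrArg Subtype.val hw)⟩

theorem exists_continuousMap_feeblyOpenAt (Y : Type*) [MetricSpace Y] [LocallyCompactSpace Y]
    [TietzeExtension.{u} Y] [Nonempty Y] : ∃ (h : C(X, Y)) (p : X), FeeblyOpenAt h p := by
  obtain ⟨y⟩ := ‹Nonempty Y›
  obtain ⟨K, hK, hyK⟩ := exists_compact_mem_nhds y
  obtain ⟨h, hh⟩ := exists_continuousMap_subset_range X hK ⟨y, mem_of_mem_nhds hyK⟩
  have hne : (interior (range h)).Nonempty :=
    ⟨y, interior_mono hh (mem_interior_iff_mem_nhds.2 hyK)⟩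
  exact ⟨h, exists_feeblyOpenAt h.continuous hne⟩

end CompactMetrizable

section Exponentials

theorem feeblyOpenAt_of_analyticOnNhd {F : Type*} [NormedAddCommGroup F] [NormedSpace ℝ F]
    {f : F → ℝ} (hf : AnalyticOnNhd ℝ f univ) (hconst : ∀ c, f ≠ Function.const F c) (x : F) :
    FeeblyOpenAt f x := by
  intro U hU
  obtain ⟨ε, hε, hball⟩ := Metric.mem_nhds_iff.1 hU
  refine Nonempty.mono (interior_mono (image_mono hball)) ?_
  have hconvex : Convex ℝ (f '' Metric.ball x ε) :=
    Real.convex_iff_isPreconnected.2 <| (convex_ball x ε).isPreconnected.image f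
      (hf.continuousOn.mono (subset_univ _))
  rw [← hconvex.nontrivial_iff_nonempty_interior, ← not_subsingleton_iff]
  intro hsub
  refine hconst (f x) (hf.eq_of_eventuallyEq (fun _ _ ↦ analyticAt_const) (z₀ := x) ?_)
  filter_upwards [Metric.ball_mem_nhds x hε] with y hy
  exact hsub (mem_image_of_mem f hy) (mem_image_of_mem f (Metric.mem_ball_self hε))

/-- The exponential function `s ↦ exp (r * s)` of rate `r`. -/
noncomputable def expMul (r : ℝ) : C(ℝ, ℝ) := ⟨fun s ↦ Real.exp (r * s), by fun_prop⟩

theorem linearIndependent_expMul : LinearIndependent ℝ expMul := by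
  let χ (r : ℝ) : Multiplicative ℝ →* ℝ :=
    { toFun := fun s ↦ expMul r s.toAdd
      map_one' := by simp [expMul]
      map_mul' := by simp [expMul, mul_add, Real.exp_add] }
  have hχ : Function.Injective χ := by
    intro r r' h
    simpa [χ, expMul] using DFunLike.congr_fun h (Multiplicative.ofAdd 1)
  exact .of_comp (ContinuousMap.coeFnLinearMap ℝ) ((linearIndependent_monoidHom _ ℝ).comp χ hχ)

/-- The span of the exponential functions of positive rate. The rate `0` is left out so that only
the zero function is constant. -/
noncomputable def posExpSpan : Submodule ℝ C(ℝ, ℝ) := Submodule.span ℝ (expMul '' Ioi 0)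

theorem rank_posExpSpan : Module.rank ℝ posExpSpan = 𝔠 := by
  rw [posExpSpan, rank_span_set (linearIndependent_expMul.linearIndepOn (Ioi 0)).id_image,
    mk_image_eq linearIndependent_expMul.injective, mk_Ioi_real]

theorem analyticOnNhd_of_mem_posExpSpan {f : C(ℝ, ℝ)} (hf : f ∈ posExpSpan) :
    AnalyticOnNhd ℝ f univ := by
  induction hf using Submodule.span_induction with
  | mem f hf =>
    obtain ⟨r, -, rfl⟩ := hf
    intro x _
    simp only [expMul, ContinuousMap.coe_mk]
    fun_prop
  | zero => exact fun _ _ ↦ analyticAt_const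
  | add f g _ _ hf hg => exact hf.add hg
  | smul c f _ hf => exact (analyticOnNhd_const (v := c)).mul hf

theorem ne_const_of_mem_posExpSpan {f : C(ℝ, ℝ)} (hf : f ∈ posExpSpan) (hf0 : f ≠ 0) (c : ℝ) :
    ⇑f ≠ Function.const ℝ c := by
  intro hfc
  have hdisj : Disjoint posExpSpan (Submodule.span ℝ (expMul '' {0})) :=
    linearIndependent_expMul.disjoint_span_image (by simp)
  refine hf0 (Submodule.disjoint_def.1 hdisj f hf ?_)
  rw [image_singleton, Submodule.mem_span_singleton]
  exact ⟨c, by ext s; simp [expMul, hfc]⟩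

theorem feeblyOpenAt_of_mem_posExpSpan {f : C(ℝ, ℝ)} (hf : f ∈ posExpSpan) (hf0 : f ≠ 0) (s : ℝ) :
    FeeblyOpenAt f s :=
  feeblyOpenAt_of_analyticOnNhd (analyticOnNhd_of_mem_posExpSpan hf)
    (ne_const_of_mem_posExpSpan hf hf0) s

end Exponentials

section LocallyConstant

variable {X E : Type*} [TopologicalSpace X] [NormedAddCommGroup E] [NormedSpace ℝ E]

variable (E) in
/-- The space of continuous maps that are constant in a neighbourhood of `p`. -/
def eventuallyConstAt (p : X) : Submodule ℝ C(X, E) where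
  carrier := {f | ∀ᶠ t in 𝓝 p, f t = f p}
  add_mem' hf hg := by
    filter_upwards [hf, hg] with t hft hgt
    simp [hft, hgt]
  zero_mem' := by simp
  smul_mem' c f hf := by
    filter_upwards [hf] with t hft
    simp [hft]

theorem exists_continuousMap_eventuallyEq_zero_dist_le {ε : ℝ} (hε : 0 < ε) :
    ∃ φ : C(E, E), (∀ᶠ z in 𝓝 0, φ z = 0) ∧ ∀ z, dist z (φ z) ≤ ε := by
  have hdisj : Disjoint (Metric.closedBall (0 : E) (ε / 2)) (Metric.ball 0 ε)ᶜ :=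
    disjoint_compl_right_iff_subset.2 (Metric.closedBall_subset_ball (half_lt_self hε))
  obtain ⟨χ, hχ_zero, hχ_one, hχ⟩ := exists_continuous_zero_one_of_isClosed
    Metric.isClosed_closedBall Metric.isOpen_ball.isClosed_compl hdisj
  refine ⟨⟨fun z ↦ χ z • z, by fun_prop⟩, ?_, fun z ↦ ?_⟩
  · filter_upwards [Metric.closedBall_mem_nhds 0 (half_pos hε)] with z hz
    simp [hχ_zero hz]
  · by_cases hz : z ∈ Metric.ball 0 ε
    · calc dist z (χ z • z) = (1 - χ z) * ‖z‖ := by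
            have hsub : z - χ z • z = (1 - χ z) • z := by rw [sub_smul, one_smul]
            rw [dist_eq_norm, hsub, norm_smul, Real.norm_of_nonneg (sub_nonneg.2 (hχ z).2)]
        _ ≤ 1 * ε := by
            gcongr
            · linarith [(hχ z).1]
            · exact (mem_ball_zero_iff.1 hz).le
        _ = ε := one_mul ε
    · simp [hχ_one hz, hε.le]

theorem dense_eventuallyConstAt [CompactSpace X] (p : X) :
    Dense (eventuallyConstAt E p : Set C(X, E)) := by
  intro f
  refine Metric.mem_closure_iff.2 fun ε hε ↦ ?_
  obtain ⟨φ, hφ_zero, hφ_dist⟩ := exists_continuousMap_eventuallyEq_zero_dist_le (E := E)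
    (half_pos hε)
  have hlim : Tendsto (fun t ↦ f t - f p) (𝓝 p) (𝓝 0) :=
    (f.continuous.sub continuous_const).tendsto' p 0 (sub_self _)
  refine ⟨⟨fun t ↦ f p + φ (f t - f p), by fun_prop⟩, ?_, ?_⟩
  · filter_upwards [hlim.eventually hφ_zero] with t ht
    simp [ht, hφ_zero.self_of_nhds]
  · refine ((ContinuousMap.dist_le (half_pos hε).le).2 fun t ↦ ?_).trans_lt (half_lt_self hε)
    calc dist (f t) (f p + φ (f t - f p))
        = dist (f t - f p) (φ (f t - f p)) := by rw [dist_eq_norm, dist_eq_norm, sub_sub]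
      _ ≤ ε / 2 := hφ_dist _

end LocallyConstant

section DenseLineability

variable {𝕜 V : Type*} [NontriviallyNormedField 𝕜] [AddCommGroup V] [Module 𝕜 V]
  [TopologicalSpace V] [ContinuousAdd V] [ContinuousSMul 𝕜 V] [SecondCountableTopology V]

theorem exists_mem_dense_span_range_add {D : Submodule 𝕜 V} (hD : Dense (D : Set V))
    {ι : Type*} [Infinite ι] (g : ι → V) :
    ∃ u : ι → V, (∀ i, u i ∈ D) ∧ Dense (Submodule.span 𝕜 (range (u + g)) : Set V) := by
  obtain ⟨W, hW⟩ := (𝓝 (0 : V)).exists_antitone_basis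
  obtain ⟨t, htD, ht, ht_dense⟩ := hD.exists_countable_dense_subset
  obtain ⟨f, rfl⟩ := ht.exists_eq_range ht_dense.nonempty
  obtain ⟨σ, hσ⟩ : ∃ σ : ι → ℕ × ℕ, Function.Surjective σ :=
    ⟨_, Nat.surjective_unpair.comp (Function.invFun_surjective (Infinite.natEmbedding ι).injective)⟩
  have hscale (i : ι) : ∃ c : 𝕜, c ≠ 0 ∧ c • g i ∈ W (σ i).2 := by
    have hlim : Tendsto (fun c : 𝕜 ↦ c • g i) (𝓝[≠] 0) (𝓝 0) :=
      ((continuous_id.smul continuous_const).tendsto' 0 0 (zero_smul 𝕜 _)).mono_left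
        nhdsWithin_le_nhds
    exact (eventually_mem_nhdsWithin.and (hlim (hW.mem _))).exists
  choose c hc hcW using hscale
  refine ⟨fun i ↦ (c i)⁻¹ • f (σ i).1, fun i ↦ D.smul_mem _ (htD (mem_range_self _)), ?_⟩
  refine dense_closure.1 (ht_dense.mono ?_)
  rintro _ ⟨n, rfl⟩
  choose i hi using fun k ↦ hσ (n, k)
  have hlim : Tendsto (fun k ↦ f n + c (i k) • g (i k)) atTop (𝓝 (f n)) := by
    have hsmall : Tendsto (fun k ↦ c (i k) • g (i k)) atTop (𝓝 0) :=
      hW.tendsto fun k ↦ by simpa only [hi] using hcW (i k)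
    simpa only [add_zero] using hsmall.const_add (f n)
  refine mem_closure_of_tendsto hlim (Eventually.of_forall fun k ↦ ?_)
  have hterm : f n + c (i k) • g (i k) = c (i k) • ((c (i k))⁻¹ • f (σ (i k)).1 + g (i k)) := by
    rw [smul_add, smul_inv_smul₀ (hc (i k)), hi]
  exact hterm ▸ Submodule.smul_mem _ _ (Submodule.subset_span ⟨i k, rfl⟩)

theorem exists_dense_submodule_of_add_mem {D G : Submodule 𝕜 V} {S : Set V}
    (hD : Dense (D : Set V)) (hG : ℵ₀ ≤ Module.rank 𝕜 G) (hS0 : 0 ∉ S)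
    (hS : ∀ d ∈ D, ∀ g ∈ G, g ≠ 0 → d + g ∈ S) :
    ∃ M : Submodule 𝕜 V, Dense (M : Set V) ∧ Module.rank 𝕜 M = Module.rank 𝕜 G ∧
      ∀ f ∈ M, f ≠ 0 → f ∈ S := by
  let b := Module.Basis.ofVectorSpace 𝕜 G
  have : Infinite (Module.Basis.ofVectorSpaceIndex 𝕜 G) :=
    infinite_iff.2 (b.mk_eq_rank'' ▸ hG)
  obtain ⟨u, huD, hdense⟩ := exists_mem_dense_span_range_add hD (fun i ↦ (b i : V))
  set w : _ → V := u + fun i ↦ (b i : V)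
  have hwS : ∀ v, v ≠ 0 → Finsupp.linearCombination 𝕜 w v ∈ S := by
    intro v hv
    have hsplit : Finsupp.linearCombination 𝕜 w v =
        Finsupp.linearCombination 𝕜 u v + (Finsupp.linearCombination 𝕜 b v : G) := by
      simp [w, Finsupp.linearCombination_apply, Finsupp.sum, Finset.sum_add_distrib]
    rw [hsplit]
    refine hS _ ?_ _ (Subtype.prop _) ?_
    · exact Submodule.sum_mem _ fun i _ ↦ D.smul_mem _ (huD i)
    · exact fun h ↦ hv (linearIndependent_iff.1 b.linearIndependent v (Subtype.ext h))
  have hli : LinearIndependent 𝕜 w :=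
    linearIndependent_iff.2 fun v hv ↦ by_contra fun hv0 ↦ hS0 (hv ▸ hwS v hv0)
  refine ⟨Submodule.span 𝕜 (range w), hdense, ?_, ?_⟩
  · rw [rank_span hli, mk_range_eq w hli.injective, b.mk_eq_rank'']
  · intro f hf hf0
    obtain ⟨v, rfl⟩ := Finsupp.mem_span_range_iff_exists_finsupp.1 hf
    exact hwS v (by rintro rfl; simp at hf0)

end DenseLineability

section Coordinatewise

variable {X E ι : Type*} [TopologicalSpace X] [NormedAddCommGroup E] [NormedSpace ℝ E]

/-- The map `t ↦ L (f (h t 1), …, f (h t n))` obtained from `h : X → ℝⁿ` by applying `f` to each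
coordinate and then `L`, as a linear function of `f`. -/
def coordinatewiseComp (L : (ι → ℝ) →L[ℝ] E) (h : C(X, ι → ℝ)) : C(ℝ, ℝ) →ₗ[ℝ] C(X, E) where
  toFun f := ⟨fun t ↦ L fun i ↦ f (h t i), by fun_prop⟩
  map_add' f g := by
    ext t
    exact map_add L (fun i ↦ f (h t i)) fun i ↦ g (h t i)
  map_smul' c f := by
    ext t
    exact map_smul L c fun i ↦ f (h t i)

theorem feeblyOpenAt_add_coordinatewiseComp [Finite ι] (L : (ι → ℝ) ≃L[ℝ] E) {h : C(X, ι → ℝ)}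
    {p : X} (hp : FeeblyOpenAt h p) {d : C(X, E)} (hd : d ∈ eventuallyConstAt E p)
    {f : C(ℝ, ℝ)} (hf : ∀ s, FeeblyOpenAt f s) :
    FeeblyOpenAt (d + coordinatewiseComp L.toContinuousLinearMap h f) p := by
  have houter (y : ι → ℝ) : FeeblyOpenAt (fun y ↦ d p + L y) y :=
    feeblyOpenAt_of_isOpenMap (L.toHomeomorph.trans (Homeomorph.addLeft (d p))).isOpenMap y
  have hinner (y : ι → ℝ) : FeeblyOpenAt (Pi.map fun _ ↦ f) y :=
    feeblyOpenAt_piMap fun i ↦ hf (y i)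
  refine (FeeblyOpenAt.comp houter (.comp hinner hp)).congr ?_
  filter_upwards [hd] with t ht
  exact congrArg (· + _) ht.symm

end Coordinatewise

theorem interior_range_zero_eq_empty {X E : Type*} [TopologicalSpace X] [NormedAddCommGroup E]
    [NormedSpace ℝ E] [Nontrivial E] : interior (range (0 : C(X, E))) = ∅ := by
  have := Module.punctured_nhds_neBot ℝ E 0
  have hsub : range (0 : C(X, E)) ⊆ {0} := by simp
  exact subset_empty_iff.1 (interior_singleton (0 : E) ▸ interior_mono hsub)

theorem lambdaSpaceFilling_maximal_dense_lineable_general {X E : Type*} [TopologicalSpace X]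
    [CompactSpace X] [MetrizableSpace X] [Uncountable X] [NormedAddCommGroup E] [NormedSpace ℝ E]
    [FiniteDimensional ℝ E] [Nontrivial E] :
    ∃ M : Submodule ℝ C(X, E), Dense (M : Set C(X, E)) ∧ Module.rank ℝ M = 𝔠 ∧
      ∀ f ∈ M, f ≠ 0 → (interior (range f)).Nonempty := by
  obtain ⟨h, p, hp⟩ := exists_continuousMap_feeblyOpenAt X (Fin (Module.finrank ℝ E) → ℝ)
  let L := (Module.finBasis ℝ E).equivFunL.symm
  let T := (coordinatewiseComp L.toContinuousLinearMap h).domRestrict posExpSpan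
  have hzero : ¬ (interior (range (0 : C(X, E)))).Nonempty :=
    not_nonempty_iff_eq_empty.2 interior_range_zero_eq_empty
  have hadd : ∀ d ∈ eventuallyConstAt E p, ∀ f, f ≠ 0 → (interior (range (d + T f))).Nonempty := by
    intro d hd f hf0
    have hf := feeblyOpenAt_of_mem_posExpSpan f.2 (Subtype.coe_ne_coe.2 hf0)
    exact (feeblyOpenAt_add_coordinatewiseComp L hp hd hf).interior_range_nonempty
  have hinj : Function.Injective T := (injective_iff_map_eq_zero T).2 fun f hf ↦
    by_contra fun hf0 ↦ hzero (by simpa [hf] using hadd 0 (zero_mem _) f hf0)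
  have hrank : Module.rank ℝ (LinearMap.range T) = 𝔠 := by
    simpa [rank_posExpSpan] using lift_rank_range_of_injective T hinj
  obtain ⟨M, hM, hM_rank, hM_sub⟩ := exists_dense_submodule_of_add_mem
    (S := {f : C(X, E) | (interior (range f)).Nonempty}) (dense_eventuallyConstAt p)
    (hrank ▸ aleph0_le_continuum) hzero (by
      rintro d hd _ ⟨f, rfl⟩ hf
      exact hadd d hd f (by rintro rfl; simp at hf))
  exact ⟨M, hM, hM_rank.trans hrank, hM_sub⟩

theorem uncountable_unitInterval : Uncountable unitInterval := by
  rw [← aleph0_lt_mk_iff, unitInterval, mk_Icc_real zero_lt_one]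
  exact aleph0_lt_continuum

theorem lambdaSpaceFilling_maximal_dense_lineable :
    ∃ M : Submodule ℝ C(unitInterval, ℝ × ℝ),
      Dense (M : Set C(unitInterval, ℝ × ℝ)) ∧
      Module.rank ℝ M = Cardinal.continuum ∧
      ∀ f ∈ M, f ≠ 0 → f ∈ LambdaSpaceFilling := by
  have := uncountable_unitInterval
  obtain ⟨M, hM, hM_rank, hM_interior⟩ :=
    lambdaSpaceFilling_maximal_dense_lineable_general (X := unitInterval) (E := ℝ × ℝ)
  exact ⟨M, hM, hM_rank, fun f hf hf0 ↦
    MeasureTheory.Measure.measure_pos_of_nonempty_interior _ (hM_interior f hf hf0)⟩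
end
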